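/- arXiv:math/0501394 — 2 statements merged into one kernel-verified Lean document; each statement's English description precedes it below -/
import Mathlib

section
/- Let n ≥ 1 and let c : ℤ/nℤ → ℤ. The quotient of ℤ^n by the subgroup generated by the rows of the circulant matrix of c is finite if and only if ∑_{k=0}^{n−1} c_k ζ^k ≠ 0 for every complex n-th root of unity ζ. -/
open Finset
open scoped Matrix

/-- The quotient of `ℤ^ι` by the row lattice of a square integer matrix is finite if and only if
the determinant is nonzero. -/
theorem Matrix.finite_quotient_closure_range_row_iff {ι : Type*} [Fintype ι] [DecidableEq ι]
    (A : Matrix ι ι ℤ) :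
    Finite ((ι → ℤ) ⧸ AddSubgroup.closure (Set.range fun i => A i)) ↔ A.det ≠ 0 := by
  have hspan : AddSubgroup.closure (Set.range fun i => A i) =
      (LinearMap.range A.vecMulLinear).toAddSubgroup := by
    rw [range_vecMulLinear, Submodule.span_int_eq_addSubgroupClosure]
    rfl
  rw [hspan]
  change Finite ((ι → ℤ) ⧸ LinearMap.range A.vecMulLinear) ↔ _
  rw [Submodule.finiteQuotient_iff, ← A.vecMulLinear.quotKerEquivRange.finrank_eq,
    ← A.vecMulLinear.ker.finrank_quotient_add_finrank, left_eq_add,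
    Submodule.finrank_eq_zero, ne_eq, ← Matrix.exists_vecMul_eq_zero_iff,
    LinearMap.ker_eq_bot']
  simp only [Matrix.vecMulLinear_apply]
  grind

/-- For an `n`-th root of unity `ζ`, the map `k ↦ ζ ^ k.val` on `ZMod n` turns sums into
products. -/
theorem ZMod.pow_val_add_of_pow_eq_one {M : Type*} [Monoid M] {n : ℕ} [NeZero n] {ζ : M}
    (hζ : ζ ^ n = 1) (a b : ZMod n) : ζ ^ (a + b).val = ζ ^ a.val * ζ ^ b.val := by
  rw [ZMod.val_add, ← pow_eq_pow_mod _ hζ, pow_add]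

/-- The powers of an `n`-th root of unity form a left eigenvector of a circulant matrix. -/
theorem Matrix.vecMul_circulant_pow_val {R : Type*} [CommSemiring R] {n : ℕ} [NeZero n] {ζ : R}
    (hζ : ζ ^ n = 1) (c : ZMod n → R) :
    (fun k : ZMod n => ζ ^ k.val) ᵥ* Matrix.circulant c =
      (∑ k, c k * ζ ^ k.val) • fun k : ZMod n => ζ ^ k.val := by
  ext j
  simp only [Matrix.vecMul, dotProduct, Matrix.circulant_apply, Pi.smul_apply, smul_eq_mul,
    Finset.sum_mul]
  rw [← Equiv.sum_comp (Equiv.addRight j)]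
  refine Finset.sum_congr rfl fun k _ => ?_
  simp only [Equiv.coe_addRight, add_sub_cancel_right, ZMod.pow_val_add_of_pow_eq_one hζ]
  ring

/-- A complex circulant matrix is nonsingular if and only if its symbol does not vanish at any
`n`-th root of unity. -/
theorem Matrix.det_circulant_ne_zero_iff {n : ℕ} [NeZero n] (c : ZMod n → ℂ) :
    (Matrix.circulant c).det ≠ 0 ↔
      ∀ ζ : ℂ, ζ ^ n = 1 → ∑ k : ZMod n, c k * ζ ^ k.val ≠ 0 := by
  refine ⟨fun hdet ζ hζ hsum => hdet ?_, fun h hdet => ?_⟩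
  · refine Matrix.exists_vecMul_eq_zero_iff.mp ⟨fun k => ζ ^ k.val, fun h0 => ?_, ?_⟩
    · simpa using congrFun h0 0
    · rw [Matrix.vecMul_circulant_pow_val hζ, hsum, zero_smul]
  · obtain ⟨v, hv, hcv⟩ := Matrix.exists_mulVec_eq_zero_iff.mpr hdet
    refine hv ((map_eq_zero_iff ZMod.dft ZMod.dft.injective).mp (funext fun k => ?_))
    set ζ : ℂ := ZMod.stdAddChar (-k) with hζ_def
    have hpow (j : ZMod n) : ζ ^ j.val = ZMod.stdAddChar (-(j * k)) := by
      rw [hζ_def, ← AddChar.map_nsmul_eq_pow, nsmul_eq_mul, ZMod.natCast_zmod_val, mul_neg]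
    have hζ : ζ ^ n = 1 := by
      rw [hζ_def, ← AddChar.map_nsmul_eq_pow, nsmul_eq_mul, ZMod.natCast_self, zero_mul,
        AddChar.map_zero_eq_one]
    have hdft : ZMod.dft v k = (fun j : ZMod n => ζ ^ j.val) ⬝ᵥ v := by
      simp only [ZMod.dft_apply, dotProduct, hpow, smul_eq_mul]
    have hprod := Matrix.dotProduct_mulVec (fun j : ZMod n => ζ ^ j.val) (Matrix.circulant c) v
    rw [hcv, dotProduct_zero, Matrix.vecMul_circulant_pow_val hζ, smul_dotProduct, smul_eq_mul,
      ← hdft] at hprod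
    exact (mul_eq_zero.mp hprod.symm).resolve_left (h ζ hζ)

/-- For `c : ℤ/nℤ → ℤ`, the quotient of `ℤⁿ` by the subgroup generated by the rows of the
circulant matrix of `c` (the matrix whose `(i,j)` entry is `c (i - j)`, so row `i` is
`j ↦ c (i - j)`) is finite if and only if `∑_{k=0}^{n−1} c_k ζ^k ≠ 0` for every complex
`n`-th root of unity `ζ`. -/
theorem stmt4 (n : ℕ) [NeZero n] (c : ZMod n → ℤ) :
    Finite ((ZMod n → ℤ) ⧸
        AddSubgroup.closure (Set.range fun i : ZMod n => Matrix.circulant c i)) ↔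
      ∀ ζ : ℂ, ζ ^ n = 1 → ∑ k : ZMod n, (c k : ℂ) * ζ ^ (k.val : ℕ) ≠ 0 := by
  rw [Matrix.finite_quotient_closure_range_row_iff,
    ← Matrix.det_circulant_ne_zero_iff (fun k => (c k : ℂ)),
    ← Matrix.map_circulant c (Int.cast : ℤ → ℂ), ← Int.cast_det, Int.cast_ne_zero]
end

section
/- Let n ≥ 1 and m be integers with gcd(m,n) = 1, and let G ∈ ℤ[X]. Then the quotient rings ℤ[X]/(X^n − 1, G(X)) and ℤ[X]/(X^n − 1, G(X^m)) are isomorphic; in particular they are isomorphic as abelian groups. -/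
open Polynomial

/-- A number coprime to `n` has an inverse modulo `n`. -/
theorem Nat.Coprime.exists_mul_modEq_one {m n : ℕ} (h : m.Coprime n) :
    ∃ k, m * k ≡ 1 [MOD n] := by
  refine ⟨((m : ZMod n)⁻¹).val, ?_⟩
  rcases n.eq_zero_or_pos with rfl | hn
  · obtain rfl : m = 1 := by simpa using h
    exact congrArg (· % 0) (by decide)
  · have : NeZero n := ⟨hn.ne'⟩
    rw [← ZMod.natCast_eq_natCast_iff]
    simpa using ZMod.coe_mul_inv_eq_one m h

namespace CyclicQuotient

variable {n : ℕ} {G : ℤ[X]} {S : Type*} [CommRing S]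

/-- The homomorphism `ℤ[X]/(X^n - 1, G) → S` sending `X` to an `n`-th root of unity `y` which is
a root of `G`. -/
noncomputable def lift (y : S) (hy : y ^ n = 1) (hG : G.eval₂ (Int.castRingHom S) y = 0) :
    (ℤ[X] ⧸ Ideal.span {(X : ℤ[X]) ^ n - 1, G}) →+* S :=
  Ideal.Quotient.lift _ (eval₂RingHom (Int.castRingHom S) y) fun a ha => by
    have hle : Ideal.span {(X : ℤ[X]) ^ n - 1, G} ≤
        RingHom.ker (eval₂RingHom (Int.castRingHom S) y) := by
      rw [Ideal.span_le]
      rintro p (rfl | rfl)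
      · simp [RingHom.mem_ker, hy]
      · simpa [RingHom.mem_ker] using hG
    exact RingHom.mem_ker.mp (hle ha)

/-- The class of `X` in `ℤ[X]/(X^n - 1, G)`. -/
noncomputable def root (n : ℕ) (G : ℤ[X]) : ℤ[X] ⧸ Ideal.span {(X : ℤ[X]) ^ n - 1, G} :=
  Ideal.Quotient.mk _ X

theorem lift_root (y : S) (hy : y ^ n = 1) (hG : G.eval₂ (Int.castRingHom S) y = 0) :
    lift y hy hG (root n G) = y := by
  rw [lift, root, Ideal.Quotient.lift_mk, coe_eval₂RingHom, eval₂_X]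

theorem root_pow : root n G ^ n = 1 := by
  rw [root, ← map_pow, ← map_one (Ideal.Quotient.mk _), Ideal.Quotient.eq]
  exact Ideal.subset_span (by simp)

theorem eval₂_root_self : G.eval₂ (Int.castRingHom _) (root n G) = 0 := by
  have h := hom_eval₂ G C (Ideal.Quotient.mk (Ideal.span {(X : ℤ[X]) ^ n - 1, G})) X
  rw [eval₂_C_X, Ideal.Quotient.eq_zero_iff_mem.mpr (Ideal.subset_span (by simp))] at h
  rw [h, root]
  congr 1

theorem hom_ext {f g : (ℤ[X] ⧸ Ideal.span {(X : ℤ[X]) ^ n - 1, G}) →+* S}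
    (h : f (root n G) = g (root n G)) : f = g :=
  Ideal.Quotient.ringHom_ext (Polynomial.ringHom_ext (by simp) h)

/-- For `m` coprime to `n`, the map `X ↦ X ^ m` induces an isomorphism
`ℤ[X]/(X^n - 1, G(X)) ≃ ℤ[X]/(X^n - 1, G(X^m))`. -/
theorem nonempty_ringEquiv_comp_pow {m : ℕ} (h : m.Coprime n) (G : ℤ[X]) :
    Nonempty ((ℤ[X] ⧸ Ideal.span {(X : ℤ[X]) ^ n - 1, G}) ≃+*
      (ℤ[X] ⧸ Ideal.span {(X : ℤ[X]) ^ n - 1, G.comp ((X : ℤ[X]) ^ m)})) := by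
  obtain ⟨k, hk⟩ := h.exists_mul_modEq_one
  have pow_mul_eq (H : ℤ[X]) : root n H ^ (m * k) = root n H := by
    simpa using pow_eq_pow_of_modEq hk root_pow
  have hpow (H : ℤ[X]) (j : ℕ) : (root n H ^ j) ^ n = 1 := by
    rw [pow_right_comm, root_pow, one_pow]
  let f := lift (root n (G.comp (X ^ m)) ^ m) (hpow _ m) (G := G) (by
    simpa [eval₂_comp] using eval₂_root_self (n := n) (G := G.comp (X ^ m)))
  let g := lift (root n G ^ k) (hpow _ k) (G := G.comp (X ^ m)) (by
    simpa [eval₂_comp, ← pow_mul, mul_comm k m, pow_mul_eq] using eval₂_root_self)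
  refine ⟨RingEquiv.ofRingHom f g (hom_ext ?_) (hom_ext ?_)⟩
  · simp [f, g, lift_root, ← pow_mul, pow_mul_eq]
  · simp [f, g, lift_root, ← pow_mul, mul_comm k m, pow_mul_eq]

end CyclicQuotient

/-- If `gcd(m,n) = 1` (with `n, m ≥ 1`) and `G ∈ ℤ[X]`, then the quotient rings
`ℤ[X]/(X^n − 1, G(X))` and `ℤ[X]/(X^n − 1, G(X^m))` are isomorphic; in particular they are
isomorphic as abelian groups. -/
theorem stmt10 (n : ℕ) [NeZero n] (m : ℕ) (h : Nat.gcd m n = 1) (G : ℤ[X]) :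
    Nonempty ((ℤ[X] ⧸ Ideal.span {(X : ℤ[X]) ^ n - 1, G}) ≃+*
        (ℤ[X] ⧸ Ideal.span {(X : ℤ[X]) ^ n - 1, G.comp ((X : ℤ[X]) ^ m)})) ∧
      Nonempty ((ℤ[X] ⧸ Ideal.span {(X : ℤ[X]) ^ n - 1, G}) ≃+
        (ℤ[X] ⧸ Ideal.span {(X : ℤ[X]) ^ n - 1, G.comp ((X : ℤ[X]) ^ m)})) := by
  obtain ⟨e⟩ := CyclicQuotient.nonempty_ringEquiv_comp_pow h G
  exact ⟨⟨e⟩, ⟨e.toAddEquiv⟩⟩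
end
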